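/- Complementary slackness: Let X = ∏_{i=1}^n [aᵢ, bᵢ] ⊂ ℝⁿ be a compact box with 0 ≤ aᵢ < bᵢ for each i, let μ be a finite signed Borel measure on X, let u* ∈ 𝒰(X) ∩ ℒ₁(X), and let γ* be a finite nonnegative Borel measure on X × X with γ₁* − γ₂* ≽_cvx μ. Then ∫_X u* dμ = ∫_{X×X} ‖x − y‖₁ dγ*(x,y) if and only if both of the following hold: (i) ∫_X u* d(γ₁* − γ₂*) = ∫_X u* dμ, and (ii) u*(x) − u*(y) = ‖x − y‖₁ for γ*-almost every (x,y). -/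

import Mathlib

open MeasureTheory Set

/-- ℓ¹ distance on `Fin n → ℝ`. -/
noncomputable def l1dist {n : ℕ} (x y : Fin n → ℝ) : ℝ := ∑ i, |x i - y i|

/-- The box `∏ i, [a i, b i]` in `ℝⁿ`. -/
def box {n : ℕ} (a b : Fin n → ℝ) : Set (Fin n → ℝ) := {x | ∀ i, x i ∈ Set.Icc (a i) (b i)}

/-- `u ∈ 𝒰(X)`: continuous, coordinatewise nondecreasing and convex on `X`. -/
def memU {n : ℕ} (X : Set (Fin n → ℝ)) (u : (Fin n → ℝ) → ℝ) : Prop :=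
  ContinuousOn u X ∧ (∀ x ∈ X, ∀ y ∈ X, (∀ i, x i ≤ y i) → u x ≤ u y) ∧ ConvexOn ℝ X u

/-- `u ∈ ℒ₁(X)`: 1-Lipschitz with respect to the ℓ¹ norm on `X`. -/
def memL1 {n : ℕ} (X : Set (Fin n → ℝ)) (u : (Fin n → ℝ) → ℝ) : Prop :=
  ∀ x ∈ X, ∀ y ∈ X, u x - u y ≤ l1dist x y

/-!
Put `m = ∫ u dμ`. Dominance tested on `u`, and the bound `u x - u y ≤ ‖x - y‖₁` integrated
against `γ`, give the chain `m ≤ ∫ u d(γ₁ - γ₂) = ∫ (u x - u y) dγ ≤ ∫ ‖x - y‖₁ dγ`.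
Its ends agree iff both inequalities are equalities, and the second one, between integrals of
almost everywhere ordered functions, is an equality iff the integrands agree almost everywhere.
This is an argument about Kantorovich potentials `φ x - ψ y ≤ c (x, y)`, here `φ = ψ = u`.
-/

section Integrals

variable {α β E : Type*} [MeasurableSpace α] [MeasurableSpace β] [NormedAddCommGroup E]

theorem integrable_of_continuousOn_of_measure_compl_eq_zero [TopologicalSpace α] [T2Space α]
    [OpensMeasurableSpace α] {μ : Measure α} [IsFiniteMeasureOnCompacts μ] {K : Set α}
    (hK : IsCompact K) (hμ : μ Kᶜ = 0) {f : α → E} (hf : ContinuousOn f K) : Integrable f μ := by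
  rw [← Measure.restrict_eq_self_of_ae_mem (mem_ae_iff.mpr hμ)]
  exact hf.integrableOn_compact hK

theorem measure_map_compl_eq_zero {μ : Measure α} {f : α → β} (hf : AEMeasurable f μ)
    {s : Set α} {t : Set β} (ht : MeasurableSet t) (hst : MapsTo f s t) (hμ : μ sᶜ = 0) :
    μ.map f tᶜ = 0 := by
  rw [Measure.map_apply_of_aemeasurable hf ht.compl]
  exact measure_mono_null (fun _ hx hxs => hx (hst hxs)) hμ

theorem integrable_map_of_continuousOn [TopologicalSpace β] [T2Space β] [OpensMeasurableSpace β]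
    {μ : Measure α} [IsFiniteMeasure μ] {f : α → β} (hf : AEMeasurable f μ) {s : Set α} {K : Set β}
    (hK : IsCompact K) (hfK : MapsTo f s K) (hμ : μ sᶜ = 0) {g : β → E} (hg : ContinuousOn g K) :
    Integrable g (μ.map f) :=
  integrable_of_continuousOn_of_measure_compl_eq_zero hK
    (measure_map_compl_eq_zero hf hK.measurableSet hfK hμ) hg

theorem integral_map_fst_sub_integral_map_snd [NormedSpace ℝ E] {γ : Measure (α × β)}
    {φ : α → E} {ψ : β → E} (hφ : Integrable φ (γ.map Prod.fst))
    (hψ : Integrable ψ (γ.map Prod.snd)) :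
    (∫ x, φ x ∂(γ.map Prod.fst)) - (∫ y, ψ y ∂(γ.map Prod.snd)) =
      ∫ p, (φ p.1 - ψ p.2) ∂γ := by
  rw [integral_map measurable_fst.aemeasurable hφ.aestronglyMeasurable,
    integral_map measurable_snd.aemeasurable hψ.aestronglyMeasurable]
  exact (integral_sub (hφ.comp_measurable measurable_fst)
    (hψ.comp_measurable measurable_snd)).symm

theorem complementary_slackness_general {γ : Measure (α × β)} {φ : α → ℝ} {ψ : β → ℝ}
    {c : α × β → ℝ} {m : ℝ} (hφ : Integrable φ (γ.map Prod.fst))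
    (hψ : Integrable ψ (γ.map Prod.snd)) (hc : Integrable c γ)
    (hle : ∀ᵐ p ∂γ, φ p.1 - ψ p.2 ≤ c p)
    (hm : m ≤ (∫ x, φ x ∂(γ.map Prod.fst)) - (∫ y, ψ y ∂(γ.map Prod.snd))) :
    m = ∫ p, c p ∂γ ↔
      (∫ x, φ x ∂(γ.map Prod.fst)) - (∫ y, ψ y ∂(γ.map Prod.snd)) = m ∧
        ∀ᵐ p ∂γ, φ p.1 - ψ p.2 = c p := by
  have hdiff : Integrable (fun p => φ p.1 - ψ p.2) γ :=
    (hφ.comp_measurable measurable_fst).sub (hψ.comp_measurable measurable_snd)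
  have hcost : ∫ p, (φ p.1 - ψ p.2) ∂γ ≤ ∫ p, c p ∂γ := integral_mono_ae hdiff hc hle
  have htight : ∫ p, (φ p.1 - ψ p.2) ∂γ = ∫ p, c p ∂γ ↔ ∀ᵐ p ∂γ, φ p.1 - ψ p.2 = c p :=
    integral_eq_iff_of_ae_le hdiff hc hle
  rw [integral_map_fst_sub_integral_map_snd hφ hψ] at hm ⊢
  rw [← htight]
  constructor
  · rintro rfl
    exact ⟨le_antisymm hcost hm, le_antisymm hcost hm⟩
  · rintro ⟨hmarginal, hcost_eq⟩
    exact hmarginal.symm.trans hcost_eq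

end Integrals

section Box

variable {n : ℕ}

theorem box_eq_Icc (a b : Fin n → ℝ) : box a b = Icc a b := by
  ext x
  simp [box, Pi.le_def, forall_and]

theorem isCompact_box (a b : Fin n → ℝ) : IsCompact (box a b) :=
  box_eq_Icc a b ▸ isCompact_Icc

theorem continuous_l1dist : Continuous fun p : (Fin n → ℝ) × (Fin n → ℝ) => l1dist p.1 p.2 := by
  unfold l1dist
  fun_prop

theorem memL1.ae_sub_le_l1dist {X : Set (Fin n → ℝ)} {u : (Fin n → ℝ) → ℝ} (hu : memL1 X u)
    {γ : Measure ((Fin n → ℝ) × (Fin n → ℝ))} (hγ : γ (X ×ˢ X)ᶜ = 0) :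
    ∀ᵐ p ∂γ, u p.1 - u p.2 ≤ l1dist p.1 p.2 := by
  filter_upwards [mem_ae_iff.mpr hγ] with p hp using hu p.1 hp.1 p.2 hp.2

end Box

/-- **Complementary slackness.** With `μ` represented by its positive/negative parts `μp, μn`
supported in the box `X`, a feasible `u*` and a feasible dual `γ*` have equal objective values
iff (i) `∫ u* d(γ₁* − γ₂*) = ∫ u* dμ`, and (ii) `u*(x) − u*(y) = ‖x − y‖₁` for `γ*`-a.e. `(x,y)`. -/
theorem complementary_slackness {n : ℕ} (a b : Fin n → ℝ) (hab : ∀ i, 0 ≤ a i ∧ a i < b i)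
    (μp μn : Measure (Fin n → ℝ)) [IsFiniteMeasure μp] [IsFiniteMeasure μn]
    (hμp : μp (box a b)ᶜ = 0) (hμn : μn (box a b)ᶜ = 0)
    (u : (Fin n → ℝ) → ℝ) (hu : memU (box a b) u) (hu1 : memL1 (box a b) u)
    (γ : Measure ((Fin n → ℝ) × (Fin n → ℝ))) (hγfin : IsFiniteMeasure γ)
    (hγsupp : γ ((box a b ×ˢ box a b)ᶜ) = 0)
    (hdom : ∀ v : (Fin n → ℝ) → ℝ, memU (box a b) v →
      (∫ x, v x ∂μp) - (∫ x, v x ∂μn) ≤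
        (∫ x, v x ∂(γ.map Prod.fst)) - (∫ x, v x ∂(γ.map Prod.snd))) :
    ((∫ x, u x ∂μp) - (∫ x, u x ∂μn) = ∫ p, l1dist p.1 p.2 ∂γ) ↔
      (((∫ x, u x ∂(γ.map Prod.fst)) - (∫ x, u x ∂(γ.map Prod.snd)) =
          (∫ x, u x ∂μp) - (∫ x, u x ∂μn)) ∧
        (∀ᵐ p ∂γ, u p.1 - u p.2 = l1dist p.1 p.2)) :=
  have hX := isCompact_box a b
  complementary_slackness_general
    (integrable_map_of_continuousOn measurable_fst.aemeasurable hX mapsTo_fst_prod hγsupp hu.1)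
    (integrable_map_of_continuousOn measurable_snd.aemeasurable hX mapsTo_snd_prod hγsupp hu.1)
    (integrable_of_continuousOn_of_measure_compl_eq_zero (hX.prod hX) hγsupp
      continuous_l1dist.continuousOn)
    (hu1.ae_sub_le_l1dist hγsupp) (hdom u hu)
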